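/- (Geometric claim (3.4) in the proof of Proposition 3.8.) For bounded open convex subsets of ℝ² of unit area, the ratio of minimal width to inradius tends to 2 as the diameter tends to infinity: for every δ > 0 there exists D₀ > 0 such that every nonempty bounded open convex set Ω ⊆ ℝ² with |Ω| = 1 and diam(Ω) ≥ D₀ satisfies 2 ≤ w(Ω)/r(Ω) < 2 + δ. -/

import Mathlib

open MeasureTheory Filter Set Real RealInnerProductSpace

noncomputable section

abbrev E2 : Type := EuclideanSpace ℝ (Fin 2)

/-- The minimal width of a bounded plane set: the infimum over unit directions `ξ` of the
width of the smallest strip orthogonal to `ξ` enclosing the set. -/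
noncomputable def minWidth (Ω : Set E2) : ℝ :=
  sInf { w : ℝ | ∃ ξ : E2, ‖ξ‖ = 1 ∧
    w = sSup { r : ℝ | ∃ x ∈ Ω, r = ⟪x, ξ⟫ } - sInf { r : ℝ | ∃ x ∈ Ω, r = ⟪x, ξ⟫ } }

/-- The inradius of a plane set: the supremum of radii of open balls contained in it. -/
noncomputable def inradius (Ω : Set E2) : ℝ :=
  sSup { ρ : ℝ | 0 < ρ ∧ ∃ x : E2, Metric.ball x ρ ⊆ Ω }

/-!
Let `w` be the minimal width. By separation, `Ω - Ω` contains the open ball of radius `w` around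
`0`, so `Ω` has a chord of length almost `w` in every direction. Take such a chord in a direction
in which the width of `Ω` is at most `2 * w`. When the diameter is much larger than `w`, the set
has a point so far from the chord that the triangle it spans with the chord is nearly a half-strip
close to the chord, and therefore contains a disc of diameter almost `w`. Finally, the minimal
width times the diameter is at most eight times the area, so at fixed area a large diameter is
automatically much larger than `w`.
-/

section InnerProductSpace

variable {E : Type*} [NormedAddCommGroup E] [InnerProductSpace ℝ E] {s : Set E}

theorem exists_unit_inner_lt_of_notMem [CompleteSpace E] (hne : s.Nonempty) (ho : IsOpen s)
    (hc : Convex ℝ s) {y : E} (hy : y ∉ s) :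
    ∃ ξ : E, ‖ξ‖ = 1 ∧ ∀ x ∈ s, ⟪x, ξ⟫ < ⟪y, ξ⟫ := by
  obtain ⟨f, hf⟩ := geometric_hahn_banach_open_point hc ho hy
  obtain ⟨g, rfl⟩ := (InnerProductSpace.toDual ℝ E).surjective f
  simp only [InnerProductSpace.toDual_apply_apply, real_inner_comm _ g] at hf
  have hg : g ≠ 0 := by
    rintro rfl
    obtain ⟨x, hx⟩ := hne
    simpa using hf x hx
  refine ⟨‖g‖⁻¹ • g, norm_smul_inv_norm hg, fun x hx => ?_⟩
  rw [real_inner_smul_right, real_inner_smul_right]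
  exact mul_lt_mul_of_pos_left (hf x hx) (inv_pos.mpr (norm_pos_iff.mpr hg))

theorem ball_subset_of_forall_exists_le_inner [CompleteSpace E] (hne : s.Nonempty)
    (ho : IsOpen s) (hc : Convex ℝ s) {c : E} {ρ : ℝ}
    (h : ∀ ξ : E, ‖ξ‖ = 1 → ∀ r < ρ, ∃ x ∈ s, ⟪c, ξ⟫ + r ≤ ⟪x, ξ⟫) :
    Metric.ball c ρ ⊆ s := by
  intro y hy
  by_contra hys
  obtain ⟨ξ, hξ, hsep⟩ := exists_unit_inner_lt_of_notMem hne ho hc hys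
  obtain ⟨x, hx, hcx⟩ := h ξ hξ ‖y - c‖ (by rwa [← mem_ball_iff_norm])
  have hyc : ⟪y - c, ξ⟫ ≤ ‖y - c‖ := by simpa [hξ] using real_inner_le_norm (y - c) ξ
  rw [inner_sub_left] at hyc
  linarith [hsep x hx]

/-- The width of `s` in the direction `ξ`, i.e. the distance between the two supporting
hyperplanes orthogonal to `ξ` when `s` is bounded and `ξ` is a unit vector. The two sets of inner
products are spelled as in `minWidth`, which is the infimum of this quantity by definition. -/
def widthAlong (s : Set E) (ξ : E) : ℝ :=
  sSup { r : ℝ | ∃ x ∈ s, r = ⟪x, ξ⟫ } - sInf { r : ℝ | ∃ x ∈ s, r = ⟪x, ξ⟫ }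

theorem isBounded_setOf_inner (hb : Bornology.IsBounded s) (ξ : E) :
    Bornology.IsBounded { r : ℝ | ∃ x ∈ s, r = ⟪x, ξ⟫ } := by
  obtain ⟨C, hC⟩ := hb.exists_norm_le
  refine (Metric.isBounded_closedBall (x := (0 : ℝ)) (r := C * ‖ξ‖)).subset ?_
  rintro _ ⟨x, hx, rfl⟩
  rw [mem_closedBall_zero_iff]
  exact (norm_inner_le_norm x ξ).trans (by gcongr; exact hC x hx)

theorem widthAlong_nonneg (hb : Bornology.IsBounded s) (ξ : E) : 0 ≤ widthAlong s ξ :=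
  have hbdd := isBounded_setOf_inner hb ξ
  sub_nonneg.mpr (Real.sInf_le_sSup _ hbdd.bddBelow hbdd.bddAbove)

theorem inner_sub_le_widthAlong (hb : Bornology.IsBounded s) {x y : E} (hx : x ∈ s) (hy : y ∈ s)
    (ξ : E) : ⟪x - y, ξ⟫ ≤ widthAlong s ξ := by
  have hbdd := isBounded_setOf_inner hb ξ
  rw [inner_sub_left]
  exact sub_le_sub (le_csSup hbdd.bddAbove ⟨x, hx, rfl⟩) (csInf_le hbdd.bddBelow ⟨y, hy, rfl⟩)

theorem abs_inner_sub_le_widthAlong (hb : Bornology.IsBounded s) {x y : E} (hx : x ∈ s)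
    (hy : y ∈ s) (ξ : E) : |⟪x - y, ξ⟫| ≤ widthAlong s ξ := by
  refine abs_le'.mpr ⟨inner_sub_le_widthAlong hb hx hy ξ, ?_⟩
  rw [← inner_neg_left, neg_sub]
  exact inner_sub_le_widthAlong hb hy hx ξ

theorem widthAlong_le (hne : s.Nonempty) {ξ : E} {C : ℝ}
    (h : ∀ x ∈ s, ∀ y ∈ s, ⟪x - y, ξ⟫ ≤ C) : widthAlong s ξ ≤ C := by
  obtain ⟨x₀, hx₀⟩ := hne
  rw [widthAlong, sub_le_iff_le_add]
  refine csSup_le ⟨_, x₀, hx₀, rfl⟩ ?_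
  rintro _ ⟨x, hx, rfl⟩
  rw [← sub_le_iff_le_add']
  refine le_csInf ⟨_, x₀, hx₀, rfl⟩ ?_
  rintro _ ⟨y, hy, rfl⟩
  have hxy := h x hx y hy
  rw [inner_sub_left] at hxy
  linarith

theorem two_mul_le_widthAlong_of_ball_subset (hb : Bornology.IsBounded s) {c ξ : E} {ρ : ℝ}
    (hball : Metric.ball c ρ ⊆ s) (hξ : ‖ξ‖ = 1) : 2 * ρ ≤ widthAlong s ξ := by
  rw [← le_div_iff₀' two_pos]
  refine le_of_forall_lt_imp_le_of_dense fun σ hσρ => ?_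
  rw [le_div_iff₀' two_pos]
  rcases le_or_gt σ 0 with hσ | hσ
  · linarith [widthAlong_nonneg hb ξ]
  have hplus : c + σ • ξ ∈ s := hball (by simp [norm_smul, hξ, abs_of_pos hσ, hσρ])
  have hminus : c - σ • ξ ∈ s := hball (by simp [norm_smul, hξ, abs_of_pos hσ, hσρ])
  calc 2 * σ = ⟪(c + σ • ξ) - (c - σ • ξ), ξ⟫ := by
        rw [add_sub_sub_cancel, ← two_smul ℝ, smul_smul, real_inner_smul_left,
          real_inner_self_eq_norm_sq, hξ, one_pow, mul_one]
    _ ≤ widthAlong s ξ := inner_sub_le_widthAlong hb hplus hminus ξ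

theorem exists_orthonormalBasis_apply_eq [FiniteDimensional ℝ E] {ι : Type*} [Fintype ι]
    (hcard : Module.finrank ℝ E = Fintype.card ι) (i : ι) {v : E} (hv : ‖v‖ = 1) :
    ∃ b : OrthonormalBasis ι ℝ E, b i = v := by
  have horth : Orthonormal ℝ (({i} : Set ι).domRestrict fun _ => v) :=
    ⟨fun _ => hv, fun j k hjk => absurd (Subsingleton.elim j k) hjk⟩
  obtain ⟨b, hb⟩ := horth.exists_orthonormalBasis_extension_of_card_eq hcard
  exact ⟨b, hb i rfl⟩

theorem norm_le_sum_abs_inner {ι : Type*} [Fintype ι] (b : OrthonormalBasis ι ℝ E) (x : E) :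
    ‖x‖ ≤ ∑ i, |⟪x, b i⟫| := by
  calc ‖x‖ = ‖∑ i, ⟪b i, x⟫ • b i‖ := by rw [b.sum_repr' x]
    _ ≤ ∑ i, ‖⟪b i, x⟫ • b i‖ := norm_sum_le _ _
    _ = ∑ i, |⟪x, b i⟫| := by simp [norm_smul, real_inner_comm]

theorem orthonormalBasis_det_smul_zero (b : OrthonormalBasis (Fin 2) ℝ E) (c : ℝ) (x : E) :
    b.toBasis.det ![c • b 0, x] = c * ⟪x, b 1⟫ := by
  rw [Module.Basis.det_apply, Matrix.det_fin_two]
  simp [Module.Basis.toMatrix_apply, b.repr_apply_apply, real_inner_comm]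

end InnerProductSpace

section Triangle

variable {E : Type*} [NormedAddCommGroup E] [InnerProductSpace ℝ E]

theorem mul_abs_sub_abs_le_abs_mul_add_mul {κ α β X Y : ℝ} (hκ : 0 ≤ κ) (hαβ : α ^ 2 + β ^ 2 = 1)
    (hβ : |β| ≤ 1 - κ) : κ * |X| - |Y| ≤ |X * α + Y * β| := by
  have hα : κ ≤ |α| := by
    refine le_of_sq_le_sq ?_ (abs_nonneg α)
    have hβ_sq : |β| ^ 2 ≤ (1 - κ) ^ 2 := by gcongr
    rw [sq_abs] at hβ_sq ⊢
    nlinarith [abs_nonneg β]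
  calc κ * |X| - |Y| ≤ |X| * |α| - |Y| * |β| := by
        rw [mul_comm κ]
        gcongr
        exact mul_le_of_le_one_right (abs_nonneg Y) (by linarith)
    _ = |X * α| - |-(Y * β)| := by rw [abs_neg, abs_mul, abs_mul]
    _ ≤ |X * α - -(Y * β)| := abs_sub_abs_le_abs_sub _ _
    _ = |X * α + Y * β| := by rw [sub_neg_eq_add]

/-- `(α, β)` is a unit direction and `(X, Y)` the position of the apex relative to the midpoint of
a base of length `t` lying on the second axis. The common left-hand side is the support function of
the disc of radius `t * (1 - κ) ^ 2 / 2` around `κ • (X, Y)`, the right-hand sides are those of the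
apex and the base. -/
theorem support_le_apex_or_base {t κ α β X Y : ℝ} (ht : 0 < t) (hκ : 0 < κ) (hκ1 : κ < 1)
    (hαβ : α ^ 2 + β ^ 2 = 1) (hXY : t / κ + |Y| ≤ κ * |X|) :
    κ * (X * α + Y * β) + t * (1 - κ) ^ 2 / 2 ≤ X * α + Y * β ∨
      κ * (X * α + Y * β) + t * (1 - κ) ^ 2 / 2 ≤ t / 2 * |β| := by
  have hκ' : 0 < 1 - κ := sub_pos.mpr hκ1
  have hsteep (hβ : |β| ≤ 1 - κ) : t / κ ≤ |X * α + Y * β| := by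
    linarith [mul_abs_sub_abs_le_abs_mul_add_mul (X := X) (Y := Y) hκ.le hαβ hβ]
  set h := X * α + Y * β
  rcases le_total (t * (1 - κ) / 2) h with hhigh | hlow
  · left
    linarith [mul_le_mul_of_nonneg_left hhigh hκ'.le]
  right
  rcases le_total (1 - κ) |β| with hβ | hβ
  · calc κ * h + t * (1 - κ) ^ 2 / 2
        ≤ κ * (t * (1 - κ) / 2) + t * (1 - κ) ^ 2 / 2 := by gcongr
      _ = t / 2 * (1 - κ) := by ring
      _ ≤ t / 2 * |β| := by gcongr
  · have hneg : h ≤ -(t / κ) := by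
      refine (le_abs'.mp (hsteep hβ)).resolve_right (not_le.mpr (hlow.trans_lt ?_))
      calc t * (1 - κ) / 2 < t := by nlinarith
        _ ≤ t / κ := le_div_self ht.le hκ hκ1.le
    calc κ * h + t * (1 - κ) ^ 2 / 2
        ≤ κ * -(t / κ) + t * 1 / 2 := by
          gcongr
          exact pow_le_one₀ hκ'.le (by linarith)
      _ = -(t / 2) := by
          field_simp
          ring
      _ ≤ t / 2 * |β| := (neg_nonpos.mpr (by positivity)).trans (by positivity)

theorem ball_subset_of_chord_of_apex {s : Set E} (ho : IsOpen s) (hc : Convex ℝ s)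
    (b : OrthonormalBasis (Fin 2) ℝ E) {m d : E} {t κ : ℝ} (ht : 0 < t) (hκ : 0 < κ) (hκ1 : κ < 1)
    (hplus : m + (t / 2) • b 1 ∈ s) (hminus : m - (t / 2) • b 1 ∈ s)
    (hapex : m + d ∈ s) (hd : t / κ + |⟪d, b 1⟫| ≤ κ * |⟪d, b 0⟫|) :
    Metric.ball (m + κ • d) (t * (1 - κ) ^ 2 / 2) ⊆ s := by
  have : FiniteDimensional ℝ E := b.toBasis.finiteDimensional_of_finite
  have : CompleteSpace E := FiniteDimensional.complete ℝ E
  refine ball_subset_of_forall_exists_le_inner ⟨_, hapex⟩ ho hc fun ξ hξ r hr => ?_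
  have hsq : ⟪b 0, ξ⟫ ^ 2 + ⟪b 1, ξ⟫ ^ 2 = 1 := by
    simpa [Fin.sum_univ_two, hξ] using b.sum_sq_norm_inner_right ξ
  have hdξ : ⟪d, b 0⟫ * ⟪b 0, ξ⟫ + ⟪d, b 1⟫ * ⟪b 1, ξ⟫ = ⟪d, ξ⟫ := by
    simpa [Fin.sum_univ_two] using b.sum_inner_mul_inner d ξ
  have hsupport := support_le_apex_or_base ht hκ hκ1 hsq hd
  rw [hdξ] at hsupport
  rw [inner_add_left, real_inner_smul_left]
  rcases hsupport with hle | hle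
  · refine ⟨_, hapex, ?_⟩
    rw [inner_add_left]
    linarith
  · rcases abs_choice ⟪b 1, ξ⟫ with habs | habs <;> rw [habs] at hle
    · refine ⟨_, hplus, ?_⟩
      rw [inner_add_left, real_inner_smul_left]
      linarith
    · refine ⟨_, hminus, ?_⟩
      rw [inner_sub_left, real_inner_smul_left]
      linarith

theorem div_add_abs_inner_le_mul_abs_inner (b : OrthonormalBasis (Fin 2) ℝ E) {x : E} {w κ : ℝ}
    (hκ : 0 < κ) (hκ1 : κ ≤ 1) (hY : |⟪x, b 1⟫| ≤ 2 * w) (hx : 5 / κ ^ 2 * w ≤ ‖x‖) :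
    w / κ + |⟪x, b 1⟫| ≤ κ * |⟪x, b 0⟫| := by
  have hw : 0 ≤ w := by linarith [abs_nonneg ⟪x, b 1⟫]
  have hX : 5 / κ ^ 2 * w - 2 * w ≤ |⟪x, b 0⟫| := by
    have hnorm := norm_le_sum_abs_inner b x
    rw [Fin.sum_univ_two] at hnorm
    linarith
  calc w / κ + |⟪x, b 1⟫| ≤ 5 * (w / κ) - 2 * (κ * w) := by
        linarith [le_div_self hw hκ hκ1, mul_le_of_le_one_left hw hκ1]
    _ = κ * (5 / κ ^ 2 * w - 2 * w) := by field_simp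
    _ ≤ κ * |⟪x, b 0⟫| := by gcongr

end Triangle

section Volume

variable {E ι : Type*} [Fintype ι] [Nonempty ι] {s : Set E}

theorem image_add_parallelepiped_subset [AddCommGroup E] [Module ℝ E] (hc : Convex ℝ s) {p : E}
    (hp : p ∈ s) {v : ι → E} (hv : ∀ i, p + v i ∈ s) :
    (p + ·) '' parallelepiped (fun i => (Fintype.card ι : ℝ)⁻¹ • v i) ⊆ s := by
  rintro _ ⟨_, hx, rfl⟩
  obtain ⟨t, ht, rfl⟩ := (mem_parallelepiped_iff _ _).mp hx
  have hcard : (Fintype.card ι : ℝ) ≠ 0 := Nat.cast_ne_zero.mpr Fintype.card_ne_zero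
  have hedge (i : ι) : p + t i • v i ∈ s := hc.add_smul_mem hp (hv i) ⟨ht.1 i, ht.2 i⟩
  have havg : ∑ i, (Fintype.card ι : ℝ)⁻¹ • (p + t i • v i) ∈ s :=
    hc.sum_mem (fun _ _ => by positivity) (by simp [hcard]) fun i _ => hedge i
  convert havg using 1
  simp only [smul_add, Finset.sum_add_distrib, Finset.sum_const, Finset.card_univ,
    ← Nat.cast_smul_eq_nsmul ℝ, smul_smul, mul_inv_cancel₀ hcard, one_smul, mul_comm]

theorem abs_det_le_card_pow_mul_volume [NormedAddCommGroup E] [InnerProductSpace ℝ E]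
    [FiniteDimensional ℝ E] [MeasurableSpace E] [BorelSpace E] [DecidableEq ι]
    (b : OrthonormalBasis ι ℝ E) (hc : Convex ℝ s) (hfin : volume s ≠ ⊤) {p : E} (hp : p ∈ s)
    {v : ι → E} (hv : ∀ i, p + v i ∈ s) :
    |b.toBasis.det v| ≤ (Fintype.card ι : ℝ) ^ Fintype.card ι * volume.real s := by
  have hdet : |b.toBasis.det fun i => (Fintype.card ι : ℝ)⁻¹ • v i| ≤ volume.real s := by
    have hvol := measure_mono (μ := volume) (image_add_parallelepiped_subset hc hp hv)
    rw [Set.image_add_left, measure_preimage_add, ← b.addHaar_eq_volume,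
      Measure.addHaar_parallelepiped, b.addHaar_eq_volume] at hvol
    exact (ENNReal.ofReal_le_iff_le_toReal hfin).mp hvol
  rw [AlternatingMap.map_smul_univ, Finset.prod_const, Finset.card_univ, smul_eq_mul, abs_mul,
    abs_of_pos (by positivity), inv_pow] at hdet
  rwa [inv_mul_le_iff₀ (by positivity)] at hdet

theorem abs_mul_abs_inner_le_four_mul_volume [NormedAddCommGroup E] [InnerProductSpace ℝ E]
    [FiniteDimensional ℝ E] [MeasurableSpace E] [BorelSpace E] (b : OrthonormalBasis (Fin 2) ℝ E)
    (hc : Convex ℝ s) (hfin : volume s ≠ ⊤) {p z : E} {c : ℝ} (hp : p ∈ s)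
    (hq : p + c • b 0 ∈ s) (hz : z ∈ s) : |c| * |⟪z - p, b 1⟫| ≤ 4 * volume.real s := by
  have hvertices (i : Fin 2) : p + ![c • b 0, z - p] i ∈ s := by
    fin_cases i
    · exact hq
    · simpa using hz
  calc |c| * |⟪z - p, b 1⟫| = |b.toBasis.det ![c • b 0, z - p]| := by
        rw [orthonormalBasis_det_smul_zero, abs_mul]
    _ ≤ (Fintype.card (Fin 2) : ℝ) ^ Fintype.card (Fin 2) * volume.real s :=
        abs_det_le_card_pow_mul_volume b hc hfin hp hvertices
    _ = 4 * volume.real s := by norm_num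

end Volume

section Plane

variable {Ω : Set E2}

theorem minWidth_nonneg (hb : Bornology.IsBounded Ω) : 0 ≤ minWidth Ω :=
  Real.sInf_nonneg (by rintro _ ⟨ξ, -, rfl⟩; exact widthAlong_nonneg hb ξ)

theorem minWidth_le_widthAlong (hb : Bornology.IsBounded Ω) {ξ : E2} (hξ : ‖ξ‖ = 1) :
    minWidth Ω ≤ widthAlong Ω ξ :=
  csInf_le ⟨0, by rintro _ ⟨ζ, -, rfl⟩; exact widthAlong_nonneg hb ζ⟩ ⟨ξ, hξ, rfl⟩

theorem setOf_unit_widthAlong_nonempty (Ω : Set E2) :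
    { w : ℝ | ∃ ξ : E2, ‖ξ‖ = 1 ∧ w = widthAlong Ω ξ }.Nonempty :=
  ⟨_, EuclideanSpace.single 0 1, by simp, rfl⟩

theorem le_minWidth {C : ℝ} (h : ∀ ξ : E2, ‖ξ‖ = 1 → C ≤ widthAlong Ω ξ) : C ≤ minWidth Ω :=
  le_csInf (setOf_unit_widthAlong_nonempty Ω) (by rintro _ ⟨ξ, hξ, rfl⟩; exact h ξ hξ)

theorem exists_unit_widthAlong_lt {w : ℝ} (h : minWidth Ω < w) :
    ∃ ξ : E2, ‖ξ‖ = 1 ∧ widthAlong Ω ξ < w := by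
  obtain ⟨_, ⟨ξ, hξ, rfl⟩, hlt⟩ := exists_lt_of_csInf_lt (setOf_unit_widthAlong_nonempty Ω) h
  exact ⟨ξ, hξ, hlt⟩

open scoped Pointwise in
theorem ball_minWidth_subset_sub (hne : Ω.Nonempty) (ho : IsOpen Ω) (hb : Bornology.IsBounded Ω)
    (hc : Convex ℝ Ω) : Metric.ball 0 (minWidth Ω) ⊆ Ω - Ω := by
  refine ball_subset_of_forall_exists_le_inner (hne.sub hne) ho.sub_right (hc.sub hc) ?_
  intro ξ hξ r hr
  by_contra! hlt
  refine (hr.trans_le (minWidth_le_widthAlong hb hξ)).not_ge (widthAlong_le hne ?_)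
  intro x hx y hy
  simpa using (hlt (x - y) (sub_mem_sub hx hy)).le

theorem two_mul_le_minWidth_of_ball_subset (hb : Bornology.IsBounded Ω) {c : E2} {ρ : ℝ}
    (hball : Metric.ball c ρ ⊆ Ω) : 2 * ρ ≤ minWidth Ω :=
  le_minWidth fun _ hξ => two_mul_le_widthAlong_of_ball_subset hb hball hξ

theorem le_inradius_of_ball_subset (hb : Bornology.IsBounded Ω) {c : E2} {ρ : ℝ} (hρ : 0 < ρ)
    (hball : Metric.ball c ρ ⊆ Ω) : ρ ≤ inradius Ω := by
  refine le_csSup ⟨minWidth Ω / 2, ?_⟩ ⟨hρ, c, hball⟩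
  rintro σ ⟨-, x, hx⟩
  linarith [two_mul_le_minWidth_of_ball_subset hb hx]

theorem inradius_pos (hne : Ω.Nonempty) (ho : IsOpen Ω) (hb : Bornology.IsBounded Ω) :
    0 < inradius Ω := by
  obtain ⟨x, hx⟩ := hne
  obtain ⟨ρ, hρ, hball⟩ := Metric.isOpen_iff.mp ho x hx
  exact hρ.trans_le (le_inradius_of_ball_subset hb hρ hball)

theorem two_mul_inradius_le_minWidth (hb : Bornology.IsBounded Ω) :
    2 * inradius Ω ≤ minWidth Ω := by
  rw [← le_div_iff₀' two_pos]
  refine Real.sSup_le ?_ (div_nonneg (minWidth_nonneg hb) zero_le_two)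
  rintro ρ ⟨-, c, hball⟩
  linarith [two_mul_le_minWidth_of_ball_subset hb hball]

theorem minWidth_pos (hne : Ω.Nonempty) (ho : IsOpen Ω) (hb : Bornology.IsBounded Ω) :
    0 < minWidth Ω :=
  (mul_pos two_pos (inradius_pos hne ho hb)).trans_le (two_mul_inradius_le_minWidth hb)

theorem exists_midpoint_of_lt_minWidth (hne : Ω.Nonempty) (ho : IsOpen Ω)
    (hb : Bornology.IsBounded Ω) (hc : Convex ℝ Ω) {n : E2} (hn : ‖n‖ = 1) {t : ℝ} (ht : 0 ≤ t)
    (htw : t < minWidth Ω) :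
    ∃ m ∈ Ω, m + (t / 2) • n ∈ Ω ∧ m - (t / 2) • n ∈ Ω := by
  have hmem : t • n ∈ Metric.ball (0 : E2) (minWidth Ω) := by
    simpa [norm_smul, hn, abs_of_nonneg ht] using htw
  obtain ⟨x, hx, y, hy, hxy⟩ := ball_minWidth_subset_sub hne ho hb hc hmem
  obtain rfl : x = y + t • n := sub_eq_iff_eq_add'.mp hxy
  refine ⟨y + (t / 2) • n, ?_, ?_, by simpa using hy⟩
  · convert hc.add_smul_mem hy hx (t := 1 / 2) ⟨by norm_num, by norm_num⟩ using 1
    module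
  · convert hx using 1
    module

theorem one_sub_cube_mul_minWidth_le_two_mul_inradius (hne : Ω.Nonempty) (ho : IsOpen Ω)
    (hb : Bornology.IsBounded Ω) (hc : Convex ℝ Ω) {κ : ℝ} (hκ : 0 < κ) (hκ1 : κ < 1)
    (hdiam : 10 / κ ^ 2 * minWidth Ω < Metric.diam Ω) :
    (1 - κ) ^ 3 * minWidth Ω ≤ 2 * inradius Ω := by
  have hw := minWidth_pos hne ho hb
  have hκ' : 0 < 1 - κ := sub_pos.mpr hκ1
  obtain ⟨n, hn, hwidth⟩ := exists_unit_widthAlong_lt (lt_two_mul_self hw)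
  obtain ⟨b, rfl⟩ := exists_orthonormalBasis_apply_eq (by simp) (1 : Fin 2) hn
  set t := (1 - κ) * minWidth Ω
  have ht : 0 < t := mul_pos hκ' hw
  have htw : t < minWidth Ω := mul_lt_of_lt_one_left hw (by linarith)
  obtain ⟨m, hm, hplus, hminus⟩ := exists_midpoint_of_lt_minWidth hne ho hb hc hn ht.le htw
  obtain ⟨z, hz, hfar⟩ : ∃ z ∈ Ω, 5 / κ ^ 2 * minWidth Ω < dist z m := by
    by_contra! hnear
    have hle := Metric.diam_le_of_subset_closedBall (by positivity) hnear
    linarith [show 2 * (5 / κ ^ 2 * minWidth Ω) = 10 / κ ^ 2 * minWidth Ω by ring]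
  have hapex : t / κ + |⟪z - m, b 1⟫| ≤ κ * |⟪z - m, b 0⟫| := by
    have hY := (abs_inner_sub_le_widthAlong hb hz hm (b 1)).trans hwidth.le
    have hsteep := div_add_abs_inner_le_mul_abs_inner b hκ hκ1.le hY (dist_eq_norm z m ▸ hfar.le)
    have htκ : t / κ ≤ minWidth Ω / κ := by gcongr
    linarith
  have hball := ball_subset_of_chord_of_apex ho hc b ht hκ hκ1 hplus hminus
    (by rwa [add_sub_cancel]) hapex
  calc (1 - κ) ^ 3 * minWidth Ω = 2 * (t * (1 - κ) ^ 2 / 2) := by simp only [t]; ring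
    _ ≤ 2 * inradius Ω := by gcongr; exact le_inradius_of_ball_subset hb (by positivity) hball

theorem minWidth_mul_dist_le (hb : Bornology.IsBounded Ω) (hc : Convex ℝ Ω) {p q : E2}
    (hp : p ∈ Ω) (hq : q ∈ Ω) : minWidth Ω * dist p q ≤ 8 * volume.real Ω := by
  rcases eq_or_ne q p with rfl | hqp
  · simp
  have hL : 0 < ‖q - p‖ := norm_sub_pos_iff.mpr hqp
  obtain ⟨b, hb₀⟩ := exists_orthonormalBasis_apply_eq (by simp) (0 : Fin 2)
    (norm_smul_inv_norm (𝕜 := ℝ) (sub_ne_zero.mpr hqp))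
  have hq_eq : p + ‖q - p‖ • b 0 = q := by
    rw [hb₀, RCLike.ofReal_real_eq_id, id, smul_inv_smul₀ hL.ne', add_sub_cancel]
  have hheight : ∀ z ∈ Ω, |⟪z - p, b 1⟫| ≤ 4 * volume.real Ω / ‖q - p‖ := fun z hz => by
    rw [le_div_iff₀' hL, ← abs_norm]
    exact abs_mul_abs_inner_le_four_mul_volume b hc hb.measure_lt_top.ne hp
      (by rwa [hq_eq]) hz
  have hwidth : widthAlong Ω (b 1) ≤ 8 * volume.real Ω / ‖q - p‖ := by
    refine widthAlong_le ⟨p, hp⟩ fun x hx y hy => ?_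
    calc ⟪x - y, b 1⟫ = ⟪x - p, b 1⟫ - ⟪y - p, b 1⟫ := by
          rw [← inner_sub_left, sub_sub_sub_cancel_right]
      _ ≤ |⟪x - p, b 1⟫| + |⟪y - p, b 1⟫| := (le_abs_self _).trans (abs_sub _ _)
      _ ≤ 4 * volume.real Ω / ‖q - p‖ + 4 * volume.real Ω / ‖q - p‖ :=
          add_le_add (hheight x hx) (hheight y hy)
      _ = 8 * volume.real Ω / ‖q - p‖ := by ring
  rw [dist_comm, dist_eq_norm, ← le_div_iff₀ hL]
  exact (minWidth_le_widthAlong hb (b.norm_eq_one 1)).trans hwidth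

theorem minWidth_mul_diam_le (hb : Bornology.IsBounded Ω) (hc : Convex ℝ Ω) :
    minWidth Ω * Metric.diam Ω ≤ 8 * volume.real Ω := by
  rcases (minWidth_nonneg hb).eq_or_lt with hw | hw
  · rw [← hw, zero_mul]
    positivity
  rw [← le_div_iff₀' hw]
  refine Metric.diam_le_of_forall_dist_le (by positivity) fun p hp q hq => ?_
  rw [le_div_iff₀' hw]
  exact minWidth_mul_dist_le hb hc hp hq

theorem exists_two_lt_mul_one_sub_cube {δ : ℝ} (hδ : 0 < δ) :
    ∃ κ : ℝ, 0 < κ ∧ κ < 1 ∧ 2 < (2 + δ) * (1 - κ) ^ 3 := by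
  have hκ1 : δ / (3 * (3 + δ)) < 1 := by
    rw [div_lt_one (by positivity)]
    linarith
  refine ⟨δ / (3 * (3 + δ)), by positivity, hκ1, ?_⟩
  set κ := δ / (3 * (3 + δ)) with hκ
  have hbernoulli : 1 - 3 * κ ≤ (1 - κ) ^ 3 := by
    simpa [sub_eq_add_neg] using one_add_mul_le_pow (show -2 ≤ -κ by linarith) 3
  calc 2 < (2 + δ) * (3 / (3 + δ)) := by
        rw [mul_div_assoc', lt_div_iff₀ (by positivity)]
        linarith
    _ = (2 + δ) * (1 - 3 * κ) := by
        rw [hκ]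
        field_simp
        ring
    _ ≤ (2 + δ) * (1 - κ) ^ 3 := by gcongr

theorem width_inradius_ratio_tendsto_two_general (δ : ℝ) (hδ : 0 < δ) :
    ∃ K : ℝ, 0 < K ∧ ∀ Ω : Set E2, Ω.Nonempty → IsOpen Ω → Bornology.IsBounded Ω →
      Convex ℝ Ω → K * (volume Ω).toReal ≤ Metric.diam Ω ^ 2 →
      2 ≤ minWidth Ω / inradius Ω ∧ minWidth Ω / inradius Ω < 2 + δ := by
  obtain ⟨κ, hκ, hκ1, hκδ⟩ := exists_two_lt_mul_one_sub_cube hδ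
  refine ⟨81 / κ ^ 2, by positivity, fun Ω hne ho hb hc hdiam => ?_⟩
  have hr := inradius_pos hne ho hb
  have hlong : 10 / κ ^ 2 * minWidth Ω < Metric.diam Ω := by
    have hA : 0 < (volume Ω).toReal :=
      ENNReal.toReal_pos (ho.measure_pos volume hne).ne' hb.measure_lt_top.ne
    refine lt_of_mul_lt_mul_right ?_ (Metric.diam_nonneg (s := Ω))
    calc 10 / κ ^ 2 * minWidth Ω * Metric.diam Ω
        = 10 / κ ^ 2 * (minWidth Ω * Metric.diam Ω) := mul_assoc _ _ _
      _ ≤ 10 / κ ^ 2 * (8 * (volume Ω).toReal) := by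
          gcongr ?_ * ?_
          exact minWidth_mul_diam_le hb hc
      _ = 80 / κ ^ 2 * (volume Ω).toReal := by ring
      _ < 81 / κ ^ 2 * (volume Ω).toReal := by gcongr; norm_num
      _ ≤ Metric.diam Ω * Metric.diam Ω := by rwa [← sq]
  refine ⟨(le_div_iff₀ hr).mpr (two_mul_inradius_le_minWidth hb), (div_lt_iff₀ hr).mpr ?_⟩
  have hw := minWidth_pos hne ho hb
  have hball := one_sub_cube_mul_minWidth_le_two_mul_inradius hne ho hb hc hκ hκ1 hlong
  refine lt_of_mul_lt_mul_left ?_ zero_le_two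
  calc 2 * minWidth Ω < (2 + δ) * (1 - κ) ^ 3 * minWidth Ω := by gcongr
    _ = (2 + δ) * ((1 - κ) ^ 3 * minWidth Ω) := mul_assoc _ _ _
    _ ≤ (2 + δ) * (2 * inradius Ω) := by gcongr
    _ = 2 * ((2 + δ) * inradius Ω) := mul_left_comm _ _ _

end Plane

/-- For bounded open convex plane sets of unit area, the ratio of minimal width to inradius
tends to `2` as the diameter tends to infinity. -/
theorem width_inradius_ratio_tendsto_two (δ : ℝ) (hδ : 0 < δ) :
    ∃ D₀ : ℝ, 0 < D₀ ∧ ∀ Ω : Set E2, Ω.Nonempty → IsOpen Ω → Bornology.IsBounded Ω →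
      Convex ℝ Ω → (volume Ω).toReal = 1 → D₀ ≤ Metric.diam Ω →
      2 ≤ minWidth Ω / inradius Ω ∧ minWidth Ω / inradius Ω < 2 + δ := by
  obtain ⟨K, hK, h⟩ := width_inradius_ratio_tendsto_two_general δ hδ
  refine ⟨K + 1, by positivity, fun Ω hne ho hb hc hvol hD => h Ω hne ho hb hc ?_⟩
  rw [hvol]
  nlinarith
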